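/- Let {E_t}_{t≥1} be a stationary ergodic sequence of nonnegative random variables with mean λ, let P_S > 0, and define the battery process B_1 = 0, B_{t+1} = B_t - P_S·1_{B_t ≥ P_S} + E_t. Then the long-run transmission probability Ψ_S = lim_{n→∞} (1/n) Σ_{t=1}^n E[1_{B_t ≥ P_S}] exists and equals min(1, λ/P_S). -/

import Mathlib

open MeasureTheory Filter

lemma int_abs_le_norm {Ω : Type*} [MeasurableSpace Ω] (μ : Measure Ω)
    [IsProbabilityMeasure μ] (h : Lp ℝ 2 μ) : ∫ ω, |h ω| ∂μ ≤ ‖h‖ := by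
  have h1 := integral_norm_eq_lintegral_enorm (Lp.aestronglyMeasurable h)
  simp only [Real.norm_eq_abs] at h1
  rw [h1, ← eLpNorm_one_eq_lintegral_enorm, Lp.norm_def]
  exact ENNReal.toReal_mono (Lp.eLpNorm_ne_top h)
    (eLpNorm_le_eLpNorm_of_exponent_le (by norm_num) (Lp.aestronglyMeasurable h))

lemma koop_iter {Ω : Type*} [MeasurableSpace Ω] (μ : Measure Ω)
    [IsProbabilityMeasure μ] (T : Ω → Ω) (hT : MeasurePreserving T μ μ)
    (g : Ω → ℝ) (hg : MemLp g 2 μ) (n : ℕ) :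
    (birkhoffSum (Lp.compMeasurePreservingₗᵢ ℝ T hT) _root_.id n (hg.toLp g) : Lp ℝ 2 μ)
      =ᵐ[μ] fun ω => birkhoffSum T g n ω := by
  induction n with
  | zero =>
    simp only [birkhoffSum_zero]
    exact Lp.coeFn_zero ℝ 2 μ
  | succ n ih =>
    have key : ((Lp.compMeasurePreservingₗᵢ ℝ T hT)^[n] (hg.toLp g) : Lp ℝ 2 μ)
        =ᵐ[μ] g ∘ T^[n] := by
      have e : (⇑(Lp.compMeasurePreservingₗᵢ ℝ T hT) : Lp ℝ 2 μ → Lp ℝ 2 μ)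
        = Lp.compMeasurePreserving T hT := rfl
      rw [e, Lp.compMeasurePreserving_iterate, Lp.toLp_compMeasurePreserving]
      exact MemLp.coeFn_toLp _
    rw [birkhoffSum_succ]
    refine (Lp.coeFn_add _ _).trans ?_
    filter_upwards [ih, key] with ω h1 h2
    simp [h1, h2, birkhoffSum_succ]

lemma mean_erg2 {Ω : Type*} [MeasurableSpace Ω] (μ : Measure Ω)
    [IsProbabilityMeasure μ] (T : Ω → Ω) (hT : Ergodic T μ)
    (g : Ω → ℝ) (hg : MemLp g 2 μ) :
    ∃ c : ℝ, Tendsto (fun n : ℕ => ∫ ω, |(n:ℝ)⁻¹ * birkhoffSum T g n ω - c| ∂μ) atTop (nhds 0) := by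
  have hP := hT.toMeasurePreserving
  set U : Lp ℝ 2 μ →ₗᵢ[ℝ] Lp ℝ 2 μ := Lp.compMeasurePreservingₗᵢ ℝ T hP with hU
  have main := ContinuousLinearMap.tendsto_birkhoffAverage_orthogonalProjection
    U.toContinuousLinearMap U.norm_toContinuousLinearMap_le (hg.toLp g)
  generalize hp : (U.toContinuousLinearMap.eqLocus
    (1 : Lp ℝ 2 μ →L[ℝ] Lp ℝ 2 μ)).orthogonalProjectionOnto (hg.toLp g) = p at main
  have hfix : U (p : Lp ℝ 2 μ) = p := by
    have := p.2
    simpa using this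
  have hinv : (p : Lp ℝ 2 μ) ∘ T =ᵐ[μ] (p : Lp ℝ 2 μ) := by
    have h1 := Lp.coeFn_compMeasurePreserving (p : Lp ℝ 2 μ) hP
    have h2 : Lp.compMeasurePreserving T hP (p : Lp ℝ 2 μ) = p := hfix
    rw [h2] at h1
    exact h1.symm
  obtain ⟨c, hc⟩ := hT.ae_eq_const_of_ae_eq_comp_ae (Lp.aestronglyMeasurable (p : Lp ℝ 2 μ)) hinv
  refine ⟨c, ?_⟩
  rw [tendsto_iff_norm_sub_tendsto_zero] at main
  refine squeeze_zero (fun n => integral_nonneg fun ω => abs_nonneg _) (fun n => ?_) main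
  refine le_trans (le_of_eq ?_) (int_abs_le_norm μ _)
  apply integral_congr_ae
  filter_upwards [Lp.coeFn_sub (birkhoffAverage ℝ U _root_.id n (hg.toLp g)) (p : Lp ℝ 2 μ),
    Lp.coeFn_smul ((n:ℝ)⁻¹) (birkhoffSum U _root_.id n (hg.toLp g)),
    koop_iter μ T hP g hg n, hc] with ω h1 h2 h3 h4
  have h5 : (birkhoffAverage ℝ U _root_.id n (hg.toLp g)) ω = (n:ℝ)⁻¹ * birkhoffSum T g n ω := by
    rw [birkhoffAverage, h2, ← h3]; rfl
  have h6 : (birkhoffAverage ℝ U _root_.id n (hg.toLp g) - (p : Lp ℝ 2 μ)) ω =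
    (n:ℝ)⁻¹ * birkhoffSum T g n ω - c := by
    rw [h1, Pi.sub_apply, h5, h4]; rfl
  exact congrArg abs h6.symm

lemma bsum_int {Ω : Type*} [MeasurableSpace Ω] (μ : Measure Ω)
    [IsProbabilityMeasure μ] (T : Ω → Ω) (hT : MeasurePreserving T μ μ)
    (g : Ω → ℝ) (hg : Integrable g μ) (n : ℕ) :
    Integrable (birkhoffSum T g n) μ ∧ ∫ ω, birkhoffSum T g n ω ∂μ = n * ∫ ω, g ω ∂μ := by
  have hi : ∀ k, Integrable (fun ω => g (T^[k] ω)) μ := fun k =>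
    (hT.iterate k).integrable_comp_of_integrable hg
  have hv : ∀ k, ∫ ω, g (T^[k] ω) ∂μ = ∫ ω, g ω ∂μ := fun k => by
    have h := (hT.iterate k)
    have h2 := integral_map (μ := μ) (φ := T^[k]) h.measurable.aemeasurable (f := g)
      (by rw [h.map_eq]; exact hg.1)
    rw [h.map_eq] at h2
    exact h2.symm
  constructor
  · exact integrable_finsetSum _ fun k _ => hi k
  · simp only [birkhoffSum]
    rw [integral_finsetSum _ fun k _ => hi k]
    simp [hv]

/-- linear-growth form of the mean ergodic theorem for square integrable functions -/
lemma mean_erg2' {Ω : Type*} [MeasurableSpace Ω] (μ : Measure Ω)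
    [IsProbabilityMeasure μ] (T : Ω → Ω) (hT : Ergodic T μ)
    (g : Ω → ℝ) (hg : MemLp g 2 μ) (ε : ℝ) (hε : 0 < ε) :
    ∃ C : ℝ, ∀ n : ℕ, ∫ ω, |birkhoffSum T g n ω - n * ∫ ω, g ω ∂μ| ∂μ ≤ ε * n + C := by
  obtain ⟨c, hc⟩ := mean_erg2 μ T hT g hg
  have hP := hT.toMeasurePreserving
  have hgi : Integrable g μ := hg.integrable (by norm_num)
  have hcg : ∫ ω, g ω ∂μ = c := by
    have h0 : Tendsto (fun n : ℕ => |∫ ω, g ω ∂μ - c|) atTop (nhds 0) := by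
      refine squeeze_zero' (Eventually.of_forall fun n => abs_nonneg _) ?_ hc
      filter_upwards [eventually_gt_atTop 0] with n hn
      have hn' : (n:ℝ) ≠ 0 := by positivity
      obtain ⟨h1, h2⟩ := bsum_int μ T hP g hgi n
      have h3 : ∫ ω, ((n:ℝ)⁻¹ * birkhoffSum T g n ω - c) ∂μ = ∫ ω, g ω ∂μ - c := by
        rw [integral_sub (h1.const_mul _) (integrable_const c), integral_const_mul, h2]
        simp [hn']
      rw [← h3]
      exact abs_integral_le_integral_abs
    have := tendsto_nhds_unique h0 tendsto_const_nhds
    linarith [abs_eq_zero.1 this.symm]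
  rw [hcg]
  obtain ⟨N, hN⟩ := (hc.eventually (gt_mem_nhds hε)).exists_forall_of_atTop
  refine ⟨∑ k ∈ Finset.range (N+1), ∫ ω, |birkhoffSum T g k ω - k * c| ∂μ, fun n => ?_⟩
  have hnn : ∀ k : ℕ, 0 ≤ ∫ ω, |birkhoffSum T g k ω - k * c| ∂μ :=
    fun k => integral_nonneg fun ω => abs_nonneg _
  by_cases h : n ≤ N
  · have := Finset.single_le_sum (f := fun k : ℕ => ∫ ω, |birkhoffSum T g k ω - k * c| ∂μ)
      (s := Finset.range (N+1)) (fun k _ => hnn k) (Finset.mem_range.2 (Nat.lt_succ_of_le h))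
    have h2 : 0 ≤ ε * n := by positivity
    linarith
  · push Not at h
    have hn0 : (0:ℝ) < n := by exact_mod_cast (by omega : 0 < n)
    have e : ∀ ω, |birkhoffSum T g n ω - n * c| =
        n * |(n:ℝ)⁻¹ * birkhoffSum T g n ω - c| := fun ω => by
      rw [← abs_of_pos hn0, ← abs_mul, abs_of_pos hn0]
      congr 1; field_simp
    simp_rw [e]
    rw [integral_const_mul]
    have := hN n h.le
    have h3 := Finset.sum_nonneg (s := Finset.range (N+1)) fun k _ => hnn k
    nlinarith

lemma mean_erg1 {Ω : Type*} [MeasurableSpace Ω] (μ : Measure Ω)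
    [IsProbabilityMeasure μ] (T : Ω → Ω) (hT : Ergodic T μ)
    (f : Ω → ℝ) (hf : Integrable f μ) (ε : ℝ) (hε : 0 < ε) :
    ∃ C : ℝ, ∀ n : ℕ, ∫ ω, |birkhoffSum T f n ω - n * ∫ ω, f ω ∂μ| ∂μ ≤ ε * n + C := by
  have hP := hT.toMeasurePreserving
  obtain ⟨g, hgs, hgL⟩ := (memLp_one_iff_integrable.2 hf).exists_simpleFunc_eLpNorm_sub_lt
    ENNReal.one_ne_top (ε := ENNReal.ofReal (ε/4)) (by simpa using hε)
  have hg2 : MemLp g 2 μ := g.memLp_of_isFiniteMeasure 2 μ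
  have hgi : Integrable g μ := hg2.integrable (by norm_num)
  have hd : Integrable (fun ω => f ω - g ω) μ := hf.sub hgi
  have hD : ∫ ω, |f ω - g ω| ∂μ ≤ ε/4 := by
    have h1 := integral_norm_eq_lintegral_enorm hd.1
    simp only [Real.norm_eq_abs] at h1
    rw [h1, ← eLpNorm_one_eq_lintegral_enorm]
    refine ENNReal.toReal_le_of_le_ofReal (by positivity) hgs.le
  obtain ⟨C, hC⟩ := mean_erg2' μ T hT g hg2 (ε/2) (by positivity)
  refine ⟨C, fun n => ?_⟩
  have a1 := (bsum_int μ T hP f hf n).1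
  have a2 := (bsum_int μ T hP g hgi n).1
  obtain ⟨a3, a3'⟩ := bsum_int μ T hP (fun ω => |f ω - g ω|) hd.abs n
  have hm : |∫ ω, g ω ∂μ - ∫ ω, f ω ∂μ| ≤ ε/4 := by
    rw [abs_sub_comm, ← integral_sub hf hgi]
    exact abs_integral_le_integral_abs.trans hD
  have hpt : ∀ ω, |birkhoffSum T f n ω - n * ∫ ω, f ω ∂μ| ≤
      |birkhoffSum T g n ω - n * ∫ ω, g ω ∂μ| + birkhoffSum T (fun ω => |f ω - g ω|) n ω
        + n * (ε/4) := fun ω => by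
    have b1 : |birkhoffSum T f n ω - birkhoffSum T g n ω| ≤
        birkhoffSum T (fun ω => |f ω - g ω|) n ω := by
      simp only [birkhoffSum]
      rw [← Finset.sum_sub_distrib]
      exact Finset.abs_sum_le_sum_abs _ _
    have b2 : |(n:ℝ) * ∫ ω, g ω ∂μ - n * ∫ ω, f ω ∂μ| ≤ n * (ε/4) := by
      rw [← mul_sub, abs_mul, Nat.abs_cast]
      gcongr
    have b3 : birkhoffSum T f n ω - n * ∫ ω, f ω ∂μ =
      (birkhoffSum T g n ω - n * ∫ ω, g ω ∂μ) + (birkhoffSum T f n ω - birkhoffSum T g n ω)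
        + ((n:ℝ) * ∫ ω, g ω ∂μ - n * ∫ ω, f ω ∂μ) := by ring
    rw [b3]
    exact (abs_add_three _ _ _).trans (by gcongr)
  have i1 : Integrable (fun ω => |birkhoffSum T g n ω - n * ∫ ω, g ω ∂μ|) μ :=
    (a2.sub (integrable_const _)).abs
  have hI : ∫ ω, |birkhoffSum T f n ω - n * ∫ ω, f ω ∂μ| ∂μ ≤
      ∫ ω, (((fun ω => |birkhoffSum T g n ω - n * ∫ ω, g ω ∂μ|)
        + birkhoffSum T (fun ω => |f ω - g ω|) n) ω + n * (ε/4)) ∂μ := integral_mono (a1.sub (integrable_const _)).abs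
    ((i1.add a3).add (integrable_const (n * (ε/4)))) hpt
  rw [integral_add (i1.add a3) (integrable_const _), integral_add' i1 a3, a3'] at hI
  simp at hI
  have := hC n
  have h5 : (n:ℝ) * ∫ ω, |f ω - g ω| ∂μ ≤ n * (ε/4) := by gcongr
  linarith

lemma battery_path (E G b : ℕ → ℝ) (PS lam : ℝ) (hPS : 0 < PS) (hE : ∀ t, 0 ≤ E t)
    (hG : ∀ t, G (t+1) = G t + E t) (hb1 : b 1 = 0)
    (hb : ∀ t, 1 ≤ t → b (t+1) = b t - (if PS ≤ b t then PS else 0) + E t)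
    (m n : ℕ) (hm : 0 < m) (hn : 1 ≤ n) :
    b n ≤ 2 * PS + (n / m + 1 : ℕ) * PS + n * max 0 (lam - PS) + |G n - n * lam|
      + ∑ j ∈ Finset.range m, |G (j * (n / m + 1)) - (j * (n / m + 1) : ℕ) * lam| := by
  have hex : ∀ n, 1 ≤ n → ∃ k, k ≤ n ∧ b n ≤ 2 * PS + (G n - G k) - ((n:ℝ) - k) * PS := by
    intro n hn
    induction n, hn using Nat.le_induction with
    | base => exact ⟨1, le_rfl, by rw [hb1]; simp; linarith⟩
    | succ n hn ih =>
      obtain ⟨k, hk, h⟩ := ih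
      by_cases hc : PS ≤ b n
      · refine ⟨k, by omega, ?_⟩
        rw [hb n hn, if_pos hc, hG]; push_cast; linarith
      · refine ⟨n, by omega, ?_⟩
        rw [hb n hn, if_neg hc, hG]; push_cast; linarith
  have hmono : Monotone G := monotone_nat_of_le_succ fun t => by rw [hG]; linarith [hE t]
  obtain ⟨k, hk, h⟩ := hex n hn
  set L := n / m + 1 with hL
  have hL0 : 0 < L := Nat.succ_pos _
  have hj1 : k / L * L ≤ k := Nat.div_mul_le_self k L
  have hj2 : k ≤ k / L * L + L := by
    have := Nat.lt_div_mul_add (a := k) hL0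
    omega
  have hj3 : k / L < m := by
    rw [Nat.div_lt_iff_lt_mul hL0]
    have := Nat.lt_mul_div_succ n hm
    rw [hL]; omega
  have hs := Finset.single_le_sum (f := fun j : ℕ => |G (j * L) - (j * L : ℕ) * lam|)
    (s := Finset.range m) (fun _ _ => abs_nonneg _) (Finset.mem_range.2 hj3)
  have hs' : |G (k / L * L) - (k / L * L : ℕ) * lam| ≤
    ∑ j ∈ Finset.range m, |G (j * L) - (j * L : ℕ) * lam| := hs
  refine le_trans ?_ (add_le_add_right hs' _)
  generalize k / L * L = q at *
  have g1 := hmono hj1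
  have c1 : (q:ℝ) ≤ k := by exact_mod_cast hj1
  have c2 : (k:ℝ) ≤ q + L := by exact_mod_cast hj2
  have c3 : (k:ℝ) ≤ n := by exact_mod_cast hk
  have c4 : (0:ℝ) ≤ q := by positivity
  have d1 := le_abs_self (G n - n * lam)
  have d2 := neg_abs_le (G q - q * lam)
  have d3 : ((n:ℝ) - q) * (lam - PS) ≤ n * max 0 (lam - PS) := by
    have e1 := le_max_left 0 (lam - PS)
    have e2 := le_max_right 0 (lam - PS)
    have e3 : ((n:ℝ) - q) * (lam - PS) ≤ (n - q) * max 0 (lam - PS) :=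
      mul_le_mul_of_nonneg_left e2 (by linarith)
    nlinarith
  have d4 : (k:ℝ) * PS ≤ (q + L) * PS := by gcongr
  nlinarith

/-- For a stationary ergodic nonnegative energy arrival process
E_t = E0 ∘ T^t with mean λ, and battery B_1 = 0,
B_{t+1} = B_t - P_S·1_{B_t ≥ P_S} + E_t, the long-run transmission probability
lim (1/n) ∑_{t=1}^n E[1_{B_t ≥ P_S}] exists and equals min(1, λ/P_S). -/
theorem stmt5 {Ω : Type*} [MeasurableSpace Ω] (μ : Measure Ω)
    [IsProbabilityMeasure μ]
    (T : Ω → Ω) (hT : Ergodic T μ)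
    (E0 : Ω → ℝ) (hE0meas : Measurable E0) (hE0nonneg : ∀ ω, 0 ≤ E0 ω)
    (hE0int : Integrable E0 μ)
    (lam : ℝ) (hlam : ∫ ω, E0 ω ∂μ = lam)
    (PS : ℝ) (hPS : 0 < PS)
    (B : ℕ → Ω → ℝ)
    (hB1 : ∀ ω, B 1 ω = 0)
    (hBrec : ∀ t, 1 ≤ t → ∀ ω,
      B (t + 1) ω = B t ω - (if PS ≤ B t ω then PS else 0) + E0 (T^[t] ω)) :
    Tendsto
      (fun n : ℕ => (1 / (n : ℝ)) * ∑ t ∈ Finset.Icc 1 n,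
        ∫ ω, (if PS ≤ B t ω then (1 : ℝ) else 0) ∂μ)
      atTop (nhds (min 1 (lam / PS))) := by
  have hP := hT.toMeasurePreserving
  have hEi : ∀ k, Integrable (fun ω => E0 (T^[k] ω)) μ := fun k =>
    (hP.iterate k).integrable_comp_of_integrable hE0int
  have hEv : ∀ k, ∫ ω, E0 (T^[k] ω) ∂μ = lam := fun k => by
    have h := (hP.iterate k)
    have h2 := integral_map (μ := μ) (φ := T^[k]) h.measurable.aemeasurable (f := E0)
      (by rw [h.map_eq]; exact hE0int.1)
    rw [h.map_eq, hlam] at h2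
    exact h2.symm
  have hBm : ∀ t, 1 ≤ t → Measurable (B t) := by
    intro t ht
    induction t, ht using Nat.le_induction with
    | base => rw [show B 1 = fun _ => 0 from funext hB1]; exact measurable_const
    | succ t ht ih =>
      rw [show B (t+1) = _ from funext (hBrec t ht)]
      exact (ih.sub (Measurable.ite (measurableSet_le measurable_const ih) measurable_const
        measurable_const)).add (hE0meas.comp (hP.iterate t).measurable)
  have hIi : ∀ t, 1 ≤ t → Integrable (fun ω => if PS ≤ B t ω then (1 : ℝ) else 0) μ := by
    intro t ht
    refine Integrable.of_bound (Measurable.ite (measurableSet_le measurable_const (hBm t ht))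
      measurable_const measurable_const).aestronglyMeasurable 1 (Eventually.of_forall fun ω => ?_)
    split_ifs <;> simp
  have hrec' : ∀ t, 1 ≤ t → B (t+1) = fun ω =>
      B t ω - PS * (if PS ≤ B t ω then (1:ℝ) else 0) + E0 (T^[t] ω) := fun t ht => by
    funext ω; rw [hBrec t ht ω]; simp
  have hBi : ∀ t, 1 ≤ t → Integrable (B t) μ := by
    intro t ht
    induction t, ht using Nat.le_induction with
    | base => rw [show B 1 = fun _ => 0 from funext hB1]; exact integrable_const 0
    | succ t ht ih =>
      rw [hrec' t ht]
      exact (ih.sub ((hIi t ht).const_mul PS)).add (hEi t)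
  have hB0 : ∀ t, 1 ≤ t → ∀ ω, 0 ≤ B t ω := by
    intro t ht ω
    induction t, ht using Nat.le_induction with
    | base => rw [hB1]
    | succ t ht ih =>
      rw [hBrec t ht]
      have := hE0nonneg (T^[t] ω)
      split_ifs <;> linarith
  have hEB : ∀ n : ℕ, ∫ ω, B (n+1) ω ∂μ = n * lam - PS * ∑ t ∈ Finset.Icc 1 n,
        ∫ ω, (if PS ≤ B t ω then (1 : ℝ) else 0) ∂μ := by
    intro n
    induction n with
    | zero => simp [hB1]
    | succ n ih =>
      have h1 : 1 ≤ n + 1 := by omega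
      have h2 : Integrable (fun ω => B (n+1) ω - PS * (if PS ≤ B (n+1) ω then (1:ℝ) else 0)) μ :=
        (hBi _ h1).sub ((hIi _ h1).const_mul PS)
      rw [hrec' (n+1) h1]
      beta_reduce
      rw [integral_add h2 (hEi _),
        integral_sub (hBi _ h1) ((hIi _ h1).const_mul PS), integral_const_mul, ih, hEv,
        Finset.sum_Icc_succ_top h1]
      push_cast; ring
  -- upper bound on the mean battery level
  have hup : ∀ η : ℝ, 0 < η → ∀ᶠ n : ℕ in atTop,
      ∫ ω, B (n+1) ω ∂μ ≤ n * (max 0 (lam - PS) + η) := by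
    intro η hη
    obtain ⟨m, hm⟩ := exists_nat_gt (3 * PS / η)
    have hm0 : (0:ℝ) < m := lt_of_le_of_lt (by positivity) hm
    have hm0' : 0 < m := by exact_mod_cast hm0
    have hmη : PS / m ≤ η / 3 := by
      rw [div_lt_iff₀ hη] at hm
      rw [div_le_iff₀ hm0]; linarith
    set ε := η / (3 * (m + 1)) with hε
    have hε0 : 0 < ε := by positivity
    have hεm : (m + 1) * ε = η / 3 := by rw [hε]; field_simp
    obtain ⟨C, hC⟩ := mean_erg1 μ T hT E0 hE0int ε hε0
    rw [hlam] at hC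
    set M := max 0 (lam - PS) with hM
    have hbound : ∀ n : ℕ, 1 ≤ n → ∫ ω, B n ω ∂μ ≤
        n * (M + 2 * η / 3) + (3 * PS + (m + 1) * (ε * m + C)) := by
      intro n hn
      set L := n / m + 1 with hL
      have hDi : ∀ k : ℕ, Integrable (fun ω => |birkhoffSum T E0 k ω - k * lam|) μ := fun k =>
        ((bsum_int μ T hP E0 hE0int k).1.sub (integrable_const _)).abs
      have hpath : ∀ ω, B n ω ≤ ((2 * PS + (L:ℕ) * PS + n * M) + |birkhoffSum T E0 n ω - n * lam|)
          + ∑ j ∈ Finset.range m, |birkhoffSum T E0 (j * L) ω - (j * L : ℕ) * lam| := fun ω =>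
        battery_path (fun t => E0 (T^[t] ω)) (fun t => birkhoffSum T E0 t ω) (fun t => B t ω)
          PS lam hPS (fun t => hE0nonneg _) (fun t => birkhoffSum_succ T E0 t ω) (hB1 ω)
          (fun t ht => hBrec t ht ω) m n hm0' hn
      have hs := integrable_finsetSum (Finset.range m) fun j _ => hDi (j * L)
      have hI := integral_mono (hBi n hn)
        (((integrable_const (2 * PS + (L:ℕ) * PS + n * M)).add (hDi n)).add hs) hpath
      rw [integral_add' ((integrable_const (2 * PS + (L:ℕ) * PS + n * M)).add (hDi n)) hs,
        integral_add' (integrable_const _) (hDi n), integral_finsetSum _ fun j _ => hDi (j * L)] at hI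
      simp only [integral_const, probReal_univ, one_smul] at hI
      have hLm : (L:ℝ) * m ≤ n + m := by
        have := Nat.div_mul_le_self n m
        have : L * m ≤ n + m := by rw [hL, add_mul]; omega
        exact_mod_cast this
      have hLP : (L:ℝ) * PS ≤ n * (η / 3) + PS := by
        have h1 : (L:ℝ) ≤ (n + m) / m := by rw [le_div_iff₀ hm0]; exact hLm
        calc (L:ℝ) * PS ≤ (n + m) / m * PS := by gcongr
          _ = n * (PS / m) + PS := by field_simp
          _ ≤ _ := by gcongr
      have hS : ∑ j ∈ Finset.range m,
          ∫ ω, |birkhoffSum T E0 (j * L) ω - (j * L : ℕ) * lam| ∂μ ≤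
          ∑ j ∈ Finset.range m, (ε * (n + m) + C) := by
        refine Finset.sum_le_sum fun j hj => (hC (j * L)).trans ?_
        have hj' : (j:ℝ) ≤ m := by exact_mod_cast (Finset.mem_range.1 hj).le
        have : ((j * L : ℕ):ℝ) ≤ n + m := by
          push_cast
          calc (j:ℝ) * L ≤ m * L := by gcongr
            _ ≤ _ := by linarith
        gcongr
      rw [Finset.sum_const, Finset.card_range, nsmul_eq_mul] at hS
      have hn1 := hC n
      have hεm' : 0 ≤ ε * m := by positivity
      have hfin : (m + 1) * ε * n = η / 3 * n := by rw [hεm]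
      nlinarith
    set K := (M + 2 * η / 3) + (3 * PS + (m + 1) * (ε * m + C)) with hK
    obtain ⟨N, hN⟩ := exists_nat_ge (K / (η / 3))
    filter_upwards [eventually_ge_atTop N] with n hn
    have h1 := hbound (n+1) (by omega)
    have h2 : K ≤ n * (η / 3) := by
      rw [div_le_iff₀ (by positivity)] at hN
      refine hN.trans ?_
      gcongr
    push_cast at h1
    nlinarith
  rw [Metric.tendsto_atTop]
  intro δ hδ
  obtain ⟨N, hN⟩ := (hup (δ * PS / 2) (by positivity)).exists_forall_of_atTop
  refine ⟨max N 1, fun n hn => ?_⟩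
  have hn1 : 1 ≤ n := le_trans (le_max_right _ _) hn
  have hnN : N ≤ n := le_trans (le_max_left _ _) hn
  have hn0 : (0:ℝ) < n := by exact_mod_cast hn1
  have hlow := hN n hnN
  rw [hEB n] at hlow
  have hpos : 0 ≤ ∫ ω, B (n+1) ω ∂μ := integral_nonneg fun ω => hB0 _ (by omega) ω
  rw [hEB n] at hpos
  have hle : ∑ t ∈ Finset.Icc 1 n, ∫ ω, (if PS ≤ B t ω then (1 : ℝ) else 0) ∂μ ≤ n := by
    calc _ ≤ ∑ t ∈ Finset.Icc 1 n, (1:ℝ) := by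
          refine Finset.sum_le_sum fun t ht => ?_
          have := integral_mono (hIi t (Finset.mem_Icc.1 ht).1) (integrable_const (1:ℝ))
            (fun ω => by dsimp only; split_ifs <;> norm_num)
          simpa using this
      _ = n := by simp
  generalize ∑ t ∈ Finset.Icc 1 n, ∫ ω, (if PS ≤ B t ω then (1 : ℝ) else 0) ∂μ = A at *
  have e1 : 1 / (n:ℝ) * A ≤ min 1 (lam / PS) := by
    rw [one_div_mul_eq_div]
    refine le_min ((div_le_one hn0).2 hle) ?_
    rw [div_le_div_iff₀ hn0 hPS]; linarith
  have e2 : min 1 (lam / PS) - δ / 2 ≤ 1 / (n:ℝ) * A := by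
    have h3 : PS * min 1 (lam / PS) = lam - max 0 (lam - PS) := by
      rcases le_total lam PS with h | h
      · rw [min_eq_right ((div_le_one hPS).2 h), max_eq_left (by linarith)]
        field_simp; ring
      · rw [min_eq_left ((one_le_div hPS).2 h), max_eq_right (by linarith)]
        ring
    rw [one_div_mul_eq_div, le_div_iff₀ hn0]
    have : PS * ((min 1 (lam / PS) - δ / 2) * n) ≤ PS * A := by
      have h4 : PS * ((min 1 (lam / PS) - δ / 2) * n)
        = (PS * min 1 (lam / PS)) * n - n * (δ * PS / 2) := by ring
      rw [h4, h3]; linarith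
    exact le_of_mul_le_mul_left this hPS
  rw [Real.dist_eq, abs_lt]
  constructor <;> linarith
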